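/- Let G be a simple graph with domination number γ(G), let uv be an edge of G, and set D_{uv} = (V(G) \ (N(u) ∪ N(v))) ∪ {u, v}. If |D_{uv}| = γ(G) (so D_{uv} is a minimum dominating set), then D_{uv} \ {u, v} is an independent set of G, i.e., no two vertices of D_{uv} \ {u, v} are adjacent in G. -/

import Mathlib

open SimpleGraph Matrix

/-- `S` is a dominating set of `G`: every vertex outside `S` has a neighbor in `S`. -/
def IsDominatingSet {V : Type*} (G : SimpleGraph V) (S : Set V) : Prop :=
  ∀ v : V, v ∉ S → ∃ u ∈ S, G.Adj u v

/-- The domination number of a finite graph: the minimum cardinality of a dominating set. -/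
noncomputable def dominationNumber {V : Type*} [Fintype V] (G : SimpleGraph V) : ℕ :=
  sInf {k : ℕ | ∃ S : Finset V, S.card = k ∧ IsDominatingSet G (S : Set V)}

/-!
A vertex `x` of a minimal dominating set `D` that has a neighbor in `D` must have a private
neighbor: some `w ∉ D` whose only neighbor in `D` is `x`, since otherwise `D \ {x}` would still
dominate. If `D` consists of a set `S` and the vertices with no neighbor in `S`, then every `w ∉ D`
has a neighbor in `S`, so only vertices of `S` can have private neighbors. The case of the theorem
is `S = {u, v}`.
-/

section Minimal

variable {V : Type*} {G : SimpleGraph V} {D : Set V}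

theorem exists_private_neighbor_of_minimal_isDominatingSet
    (hD : Minimal (IsDominatingSet G) D) {x y : V} (hx : x ∈ D) (hy : y ∈ D) (hxy : G.Adj x y) :
    ∃ w ∉ D, ∀ z ∈ D, G.Adj z w → z = x := by
  by_contra! h
  have hdom : IsDominatingSet G (D \ {x}) := by
    intro w hw
    by_cases hwD : w ∈ D
    · obtain rfl : w = x := by_contra fun hwx => hw ⟨hwD, hwx⟩
      exact ⟨y, ⟨hy, hxy.ne'⟩, hxy.symm⟩
    · obtain ⟨z, hzD, hzw, hzx⟩ := h w hwD
      exact ⟨z, ⟨hzD, hzx⟩, hzw⟩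
  exact (hD.le_of_le hdom Set.sdiff_subset hx).2 rfl

/-- The dominating set obtained from `S` by adding every vertex with no neighbor in `S`. It extends
the construction of `D_{uv}`, which is the case `S = {u, v}`, to arbitrary sets `S`. -/
def dominatingExtension (G : SimpleGraph V) (S : Set V) : Set V :=
  S ∪ {w | ∀ s ∈ S, ¬ G.Adj s w}

theorem exists_adj_of_notMem_dominatingExtension {S : Set V} {w : V}
    (hw : w ∉ dominatingExtension G S) : ∃ s ∈ S, G.Adj s w := by
  by_contra! h
  exact hw (Or.inr h)

theorem isDominatingSet_dominatingExtension (G : SimpleGraph V) (S : Set V) :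
    IsDominatingSet G (dominatingExtension G S) := fun _ hw =>
  let ⟨s, hs, hsw⟩ := exists_adj_of_notMem_dominatingExtension hw
  ⟨s, Or.inl hs, hsw⟩

theorem independent_of_minimum_dominating_Duv_general {S : Set V}
    (hmin : Minimal (IsDominatingSet G) (dominatingExtension G S)) :
    G.IsIndepSet (dominatingExtension G S \ S) := by
  rintro x ⟨hx, hxS⟩ y ⟨hy, -⟩ - hxy
  obtain ⟨w, hw, hprivate⟩ :=
    exists_private_neighbor_of_minimal_isDominatingSet hmin hx hy hxy
  obtain ⟨s, hs, hsw⟩ := exists_adj_of_notMem_dominatingExtension hw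
  exact hxS (hprivate s (Or.inl hs) hsw ▸ hs)

end Minimal

section Finite

variable {V : Type*} [Fintype V] {G : SimpleGraph V}

theorem dominationNumber_le_card {S : Finset V} (hS : IsDominatingSet G (S : Set V)) :
    dominationNumber G ≤ S.card :=
  Nat.sInf_le ⟨S, rfl, hS⟩

theorem IsDominatingSet.minimal_of_card_le {S : Finset V} (hS : IsDominatingSet G (S : Set V))
    (hcard : S.card ≤ dominationNumber G) : Minimal (IsDominatingSet G) (S : Set V) := by
  refine ⟨hS, fun T hT hTS => ?_⟩
  lift T to Finset V using T.toFinite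
  have hTS' : T ⊆ S := Finset.coe_subset.mp hTS
  exact (Finset.eq_of_subset_of_card_le hTS' (hcard.trans (dominationNumber_le_card hT))).ge

theorem minimal_dominatingExtension_of_card_le {D : Finset V} {S : Set V}
    (hD : (D : Set V) = dominatingExtension G S) (hcard : D.card ≤ dominationNumber G) :
    Minimal (IsDominatingSet G) (dominatingExtension G S) := by
  have hdom : IsDominatingSet G (D : Set V) := hD ▸ isDominatingSet_dominatingExtension G S
  exact hD ▸ hdom.minimal_of_card_le hcard

theorem coe_univ_sdiff_neighborFinset_union_pair [DecidableEq V] [DecidableRel G.Adj] (u v : V) :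
    (((Finset.univ \ (G.neighborFinset u ∪ G.neighborFinset v)) ∪ {u, v} : Finset V) : Set V) =
      dominatingExtension G {u, v} := by
  ext w
  simp [dominatingExtension, or_assoc]

end Finite

theorem independent_of_minimum_dominating_Duv
    {V : Type*} [Fintype V] [DecidableEq V] (G : SimpleGraph V) [DecidableRel G.Adj]
    (u v : V) (huv : G.Adj u v)
    (D : Finset V)
    (hD : D = (Finset.univ \ (G.neighborFinset u ∪ G.neighborFinset v)) ∪ {u, v})
    (hcard : D.card = dominationNumber G) :
    ∀ x ∈ D, ∀ y ∈ D, x ≠ u → x ≠ v → y ≠ u → y ≠ v → ¬ G.Adj x y := by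
  have hDuv : (D : Set V) = dominatingExtension G {u, v} :=
    hD ▸ coe_univ_sdiff_neighborFinset_union_pair u v
  have hindep := independent_of_minimum_dominating_Duv_general
    (minimal_dominatingExtension_of_card_le hDuv hcard.le)
  rw [← hDuv] at hindep
  exact fun x hx y hy hxu hxv hyu hyv hxy =>
    hindep ⟨hx, by simp [hxu, hxv]⟩ ⟨hy, by simp [hyu, hyv]⟩ hxy.ne hxy
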